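/- For all positive integers k1, …, kn one has y ш̄ z_{k1} z_{k2} ⋯ z_{kn} = Σ_{i=0}^{n} z_{k1} ⋯ z_{k_i} z_1 z_{k_{i+1}} ⋯ z_{kn} + Σ_{1 ≤ i ≤ n, k_i ≥ 2} Σ_{j=0}^{k_i − 2} z_{k1} ⋯ z_{k_{i−1}} z_{k_i − j} z_{j+1} z_{k_{i+1}} ⋯ z_{kn} − Σ_{i=1}^{n} (k_i + δ_{ni}) z_{k1} ⋯ z_{k_{i−1}} z_{k_i + 1} z_{k_{i+1}} ⋯ z_{kn}, where δ_{ni} = 1 if i = n and 0 otherwise. -/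

import Mathlib

open scoped BigOperators

/-- The two-letter alphabet {x, y}. -/
inductive Letter : Type
  | x : Letter
  | y : Letter
deriving DecidableEq

/-- `H = ℚ⟨x,y⟩`, the noncommutative polynomial ring over ℚ in two
indeterminates, realized as the monoid algebra of the free monoid on `{x,y}`. -/
abbrev H : Type := MonoidAlgebra ℚ (FreeMonoid Letter)

namespace H

/-- The monomial (word) of `H` corresponding to an element of the free monoid. -/
noncomputable def word (w : FreeMonoid Letter) : H := MonoidAlgebra.single w 1

/-- The generator `x`. -/
noncomputable def X : H := word (FreeMonoid.of Letter.x)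

/-- The generator `y`. -/
noncomputable def Y : H := word (FreeMonoid.of Letter.y)

/-- The word `z_k = x^{k-1} y` (for `k ≥ 1`). -/
def zW (k : ℕ) : FreeMonoid Letter :=
  FreeMonoid.ofList (List.replicate (k - 1) Letter.x ++ [Letter.y])

/-- `z_k = x^{k-1} y` as an element of `H`. -/
noncomputable def z (k : ℕ) : H := word (zW k)

/-- A list `[k₁,…,kₙ]` gives the word `z_{k₁} z_{k₂} ⋯ z_{kₙ}`. -/
def zListW (ks : List ℕ) : FreeMonoid Letter :=
  FreeMonoid.ofList (ks.flatMap fun k => List.replicate (k - 1) Letter.x ++ [Letter.y])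

/-- `H¹ = ℚ + Hy` as a ℚ-submodule of `H`. -/
noncomputable def H1 : Submodule ℚ H :=
  LinearMap.range (LinearMap.mulRight ℚ Y) ⊔ Submodule.span ℚ {1}

/-- `H⁰ = ℚ + xHy` as a ℚ-submodule of `H`. -/
noncomputable def H0 : Submodule ℚ H :=
  LinearMap.range ((LinearMap.mulRight ℚ Y).comp (LinearMap.mulLeft ℚ X)) ⊔
    Submodule.span ℚ {1}

/-- Parse a word of `H¹` into the exponent list of its `z`-decomposition:
`z_{k₁}⋯z_{kₙ} ↦ [k₁,…,kₙ]` (auxiliary accumulator version). -/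
def toZAux : List Letter → ℕ → List ℕ
  | [], _ => []
  | Letter.x :: r, n => toZAux r (n + 1)
  | Letter.y :: r, n => (n + 1) :: toZAux r 0

/-- The `z`-decomposition of a word of `H¹`. -/
def toZ (w : FreeMonoid Letter) : List ℕ := toZAux (FreeMonoid.toList w) 0

/-- The harmonic product on words of `H¹` (via `z`-decompositions):
`1 * w = w * 1 = w` and
`z_k w₁ * z_l w₂ = z_k (w₁ * z_l w₂) + z_l (z_k w₁ * w₂) + z_{k+l} (w₁ * w₂)`. -/
noncomputable def harmW : List ℕ → List ℕ → H
  | [], w => word (zListW w)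
  | k :: w1, [] => word (zListW (k :: w1))
  | k :: w1, l :: w2 =>
      z k * harmW w1 (l :: w2) + z l * harmW (k :: w1) w2 + z (k + l) * harmW w1 w2
termination_by w1 w2 => w1.length + w2.length
decreasing_by all_goals simp [Nat.lt_succ_iff] <;> omega

/-- The n-harmonic product on words of `H¹`:
`1 *̄ w = w *̄ 1 = w` and
`z_k w₁ *̄ z_l w₂ = z_k (w₁ *̄ z_l w₂) + z_l (z_k w₁ *̄ w₂) − z_{k+l} (w₁ *̄ w₂)`. -/
noncomputable def nharmW : List ℕ → List ℕ → H
  | [], w => word (zListW w)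
  | k :: w1, [] => word (zListW (k :: w1))
  | k :: w1, l :: w2 =>
      z k * nharmW w1 (l :: w2) + z l * nharmW (k :: w1) w2 - z (k + l) * nharmW w1 w2
termination_by w1 w2 => w1.length + w2.length
decreasing_by all_goals simp [Nat.lt_succ_iff] <;> omega

/-- The harmonic product `*` on `H¹`, extended ℚ-bilinearly. -/
noncomputable def harm (a b : H) : H :=
  Finsupp.sum a.coeff fun w1 c1 =>
    Finsupp.sum b.coeff fun w2 c2 => (c1 * c2) • harmW (toZ w1) (toZ w2)

/-- The n-harmonic product `*̄` on `H¹`, extended ℚ-bilinearly. -/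
noncomputable def nharm (a b : H) : H :=
  Finsupp.sum a.coeff fun w1 c1 =>
    Finsupp.sum b.coeff fun w2 c2 => (c1 * c2) • nharmW (toZ w1) (toZ w2)

/-- The letter exchange `τ(x) = y`, `τ(y) = x`. -/
def τ : Letter → Letter
  | Letter.x => Letter.y
  | Letter.y => Letter.x

/-- `δ(w) = 1` if `w` is the empty word, `0` otherwise. -/
def δ : List Letter → ℚ
  | [] => 1
  | _ :: _ => 0

/-- The shuffle product on words:
`1 ш w = w ш 1 = w` and `u₁w₁ ш u₂w₂ = u₁(w₁ ш u₂w₂) + u₂(u₁w₁ ш w₂)`. -/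
noncomputable def shW : List Letter → List Letter → H
  | [], w => word (FreeMonoid.ofList w)
  | u :: w, [] => word (FreeMonoid.ofList (u :: w))
  | u1 :: w1, u2 :: w2 =>
      word (FreeMonoid.of u1) * shW w1 (u2 :: w2) +
        word (FreeMonoid.of u2) * shW (u1 :: w1) w2
termination_by w1 w2 => w1.length + w2.length
decreasing_by all_goals simp [Nat.lt_succ_iff]

/-- The n-shuffle product on words: `1 ш̄ w = w ш̄ 1 = w` and
`u₁w₁ ш̄ u₂w₂ = u₁(w₁ ш̄ u₂w₂) + u₂(u₁w₁ ш̄ w₂) − δ(w₁)τ(u₁)u₂w₂ − δ(w₂)τ(u₂)u₁w₁`. -/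
noncomputable def nshW : List Letter → List Letter → H
  | [], w => word (FreeMonoid.ofList w)
  | u :: w, [] => word (FreeMonoid.ofList (u :: w))
  | u1 :: w1, u2 :: w2 =>
      word (FreeMonoid.of u1) * nshW w1 (u2 :: w2) +
        word (FreeMonoid.of u2) * nshW (u1 :: w1) w2 -
        δ w1 • word (FreeMonoid.ofList (τ u1 :: u2 :: w2)) -
        δ w2 • word (FreeMonoid.ofList (τ u2 :: u1 :: w1))
termination_by w1 w2 => w1.length + w2.length
decreasing_by all_goals simp [Nat.lt_succ_iff]

/-- The shuffle product `ш` on `H`, extended ℚ-bilinearly. -/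
noncomputable def sh (a b : H) : H :=
  Finsupp.sum a.coeff fun w1 c1 =>
    Finsupp.sum b.coeff fun w2 c2 =>
      (c1 * c2) • shW (FreeMonoid.toList w1) (FreeMonoid.toList w2)

/-- The n-shuffle product `ш̄` on `H`, extended ℚ-bilinearly. -/
noncomputable def nsh (a b : H) : H :=
  Finsupp.sum a.coeff fun w1 c1 =>
    Finsupp.sum b.coeff fun w2 c2 =>
      (c1 * c2) • nshW (FreeMonoid.toList w1) (FreeMonoid.toList w2)

/-- `S₁`: the ℚ-algebra endomorphism of `H` with `S₁(x) = x`, `S₁(y) = x + y`. -/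
noncomputable def S1 : H →ₐ[ℚ] H :=
  MonoidAlgebra.lift ℚ H (FreeMonoid Letter)
    (FreeMonoid.lift fun u => match u with
      | Letter.x => X
      | Letter.y => X + Y)

/-- `S₂`: the ℚ-algebra endomorphism of `H` with `S₂(x) = x`, `S₂(y) = y − x`. -/
noncomputable def S2 : H →ₐ[ℚ] H :=
  MonoidAlgebra.lift ℚ H (FreeMonoid Letter)
    (FreeMonoid.lift fun u => match u with
      | Letter.x => X
      | Letter.y => Y - X)

/-- `S` on a word: `S(1) = 1` and `S(Fy) = S₁(F)y`. -/
noncomputable def SW (w : FreeMonoid Letter) : H :=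
  match (FreeMonoid.toList w).getLast? with
  | some Letter.y =>
      S1 (word (FreeMonoid.ofList (FreeMonoid.toList w).dropLast)) * Y
  | _ => word w

/-- The ℚ-linear map `S : H¹ → H¹` with `S(1) = 1`, `S(Fy) = S₁(F)y`. -/
noncomputable def S (a : H) : H := Finsupp.sum a.coeff fun w c => c • SW w

/-- `S̃` on a word: `S̃(1) = 1` and `S̃(Fy) = S₂(F)y`. -/
noncomputable def StW (w : FreeMonoid Letter) : H :=
  match (FreeMonoid.toList w).getLast? with
  | some Letter.y =>
      S2 (word (FreeMonoid.ofList (FreeMonoid.toList w).dropLast)) * Y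
  | _ => word w

/-- The ℚ-linear map `S̃ : H¹ → H¹` with `S̃(1) = 1`, `S̃(Fy) = S₂(F)y`. -/
noncomputable def St (a : H) : H := Finsupp.sum a.coeff fun w c => c • StW w

/-- The multiple zeta value `ζ(k₁,…,kₙ)`: the sum over strictly decreasing
tuples `m₁ > m₂ > ⋯ > mₙ > 0` of `1/(m₁^{k₁}⋯mₙ^{kₙ})`. -/
noncomputable def mzeta (ks : List ℕ) : ℝ :=
  ∑' m : {f : Fin ks.length → ℕ // (∀ i, 0 < f i) ∧
      ∀ i j : Fin ks.length, i < j → f j < f i},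
    ∏ i : Fin ks.length, ((m.1 i : ℝ) ^ ks.get i)⁻¹

/-- The non-strict multiple zeta value `ζ̄(k₁,…,kₙ)`: the sum over weakly
decreasing tuples `m₁ ≥ m₂ ≥ ⋯ ≥ mₙ > 0` of `1/(m₁^{k₁}⋯mₙ^{kₙ})`. -/
noncomputable def nmzeta (ks : List ℕ) : ℝ :=
  ∑' m : {f : Fin ks.length → ℕ // (∀ i, 0 < f i) ∧
      ∀ i j : Fin ks.length, i ≤ j → f j ≤ f i},
    ∏ i : Fin ks.length, ((m.1 i : ℝ) ^ ks.get i)⁻¹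

/-- The evaluation map `Z : H⁰ → ℝ`, `Z(1) = 1`,
`Z(z_{k₁}⋯z_{kₙ}) = ζ(k₁,…,kₙ)` (extended ℚ-linearly to `H`). -/
noncomputable def Z (a : H) : ℝ := Finsupp.sum a.coeff fun w c => (c : ℝ) * mzeta (toZ w)

/-- The n-evaluation map `Z̄ : H⁰ → ℝ`, `Z̄(1) = 1`,
`Z̄(z_{k₁}⋯z_{kₙ}) = ζ̄(k₁,…,kₙ)` (extended ℚ-linearly to `H`). -/
noncomputable def Zbar (a : H) : ℝ := Finsupp.sum a.coeff fun w c => (c : ℝ) * nmzeta (toZ w)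

/-- `i`-fold n-harmonic power: `a^{*̄ 0} = 1`, `a^{*̄ (i+1)} = a *̄ a^{*̄ i}`. -/
noncomputable def nharmPow : ℕ → H → H
  | 0, _ => 1
  | i + 1, a => nharm a (nharmPow i a)

/-- `i`-fold n-shuffle power: `a^{ш̄ 0} = 1`, `a^{ш̄ (i+1)} = a ш̄ a^{ш̄ i}`. -/
noncomputable def nshPow : ℕ → H → H
  | 0, _ => 1
  | i + 1, a => nsh a (nshPow i a)

end H

open H

/-- The word attached to a list of letters. -/
noncomputable def WL (l : List Letter) : H := word (FreeMonoid.ofList l)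

theorem of_mul_WL (u : Letter) (l : List Letter) :
    word (FreeMonoid.of u) * WL l = WL (u :: l) := by
  unfold WL word
  rw [MonoidAlgebra.single_mul_single, one_mul]
  rfl

theorem WL_mul_WL (l m : List Letter) : WL l * WL m = WL (l ++ m) := by
  unfold WL word
  rw [MonoidAlgebra.single_mul_single, one_mul]
  rfl

/-- Letters of `z_{k_1} ... z_{k_n}`. -/
def zl (ks : List ℕ) : List Letter :=
  ks.flatMap fun k => List.replicate (k - 1) Letter.x ++ [Letter.y]

theorem word_zListW (ks : List ℕ) : word (zListW ks) = WL (zl ks) := rfl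

theorem zl_cons (k : ℕ) (ks : List ℕ) :
    zl (k :: ks) = List.replicate (k - 1) Letter.x ++ Letter.y :: zl ks := by
  simp [zl]

theorem zl_append (a b : List ℕ) : zl (a ++ b) = zl a ++ zl b := by
  simp [zl]

theorem nsh_word (a b : List Letter) :
    nsh (WL a) (WL b) = nshW a b := by
  unfold nsh WL word
  simp [MonoidAlgebra.coeff_single, Finsupp.sum_single_index]

theorem nshW_y_nil : nshW [Letter.y] [] = WL [Letter.y] := by
  simp [nshW, WL]

theorem nshW_y_cons (u : Letter) (w : List Letter) :
    nshW [Letter.y] (u :: w) = WL (Letter.y :: u :: w) +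
      word (FreeMonoid.of u) * nshW [Letter.y] w - WL (Letter.x :: u :: w) -
      δ w • WL [τ u, Letter.y] := by
  rw [nshW, nshW]
  have := of_mul_WL Letter.y (u :: w)
  unfold WL at this ⊢
  rw [this]
  simp [δ, τ]

theorem step (L : List Letter) (m : ℕ) :
    nshW [Letter.y] (List.replicate m Letter.x ++ Letter.y :: L) =
      WL (Letter.y :: (List.replicate m Letter.x ++ Letter.y :: L)) +
      ∑ j ∈ Finset.range m, WL (List.replicate (m - j) Letter.x ++ Letter.y ::
        (List.replicate j Letter.x ++ Letter.y :: L)) +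
      WL (List.replicate m Letter.x ++ [Letter.y]) * nshW [Letter.y] L -
      ((m : ℚ) + 1 + δ L) • WL (List.replicate (m + 1) Letter.x ++ Letter.y :: L) := by
  induction m with
  | zero =>
    have h : δ L • WL [Letter.x, Letter.y] = δ L • WL (Letter.x :: Letter.y :: L) := by
      cases L <;> simp [δ]
    simp only [List.replicate_zero, List.nil_append, nshW_y_cons, τ, h, Finset.range_zero,
      Finset.sum_empty, List.replicate_succ, List.cons_append]
    simp only [WL, FreeMonoid.ofList_singleton]
    push_cast
    module
  | succ m ih =>
    have h0 : δ (List.replicate m Letter.x ++ Letter.y :: L) = 0 := by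
      cases m <;> simp [List.replicate_succ, δ]
    have hs : ∀ j ∈ Finset.range m,
        WL (List.replicate (m + 1 - j) Letter.x ++ Letter.y ::
          (List.replicate j Letter.x ++ Letter.y :: L)) =
        WL (Letter.x :: (List.replicate (m - j) Letter.x ++ Letter.y ::
          (List.replicate j Letter.x ++ Letter.y :: L))) := by
      intro j hj
      have : m + 1 - j = (m - j) + 1 := by have := Finset.mem_range.1 hj; omega
      rw [this, List.replicate_succ, List.cons_append]
    have h1 : m + 1 - m = 1 := by omega
    rw [Finset.sum_range_succ, Finset.sum_congr rfl hs, h1]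
    simp only [List.replicate_succ, List.cons_append, nshW_y_cons, h0] at ih ⊢
    rw [ih]
    simp only [mul_add, mul_sub, Finset.mul_sum, mul_smul_comm, ← mul_assoc, of_mul_WL,
      List.replicate_zero, List.nil_append]
    push_cast
    module

theorem delta_zl (t : List ℕ) : δ (zl t) = if 0 = t.length then 1 else 0 := by
  cases t with
  | nil => simp [zl, δ]
  | cons a t =>
    rw [zl_cons]
    cases (a - 1) <;> simp [List.replicate_succ, δ]

theorem main_aux (ks : List ℕ) (hpos : ∀ a ∈ ks, 0 < a) :
    nshW [Letter.y] (zl ks) =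
      (∑ i ∈ Finset.range (ks.length + 1),
        WL (zl (ks.take i ++ [1] ++ ks.drop i))) +
      (∑ i ∈ Finset.range ks.length,
        if 2 ≤ ks.getD i 0 then
          ∑ j ∈ Finset.range (ks.getD i 0 - 1),
            WL (zl (ks.take i ++ [ks.getD i 0 - j, j + 1] ++ ks.drop (i + 1)))
        else 0) -
      ∑ i ∈ Finset.range ks.length,
        ((ks.getD i 0 : ℚ) + if i = ks.length - 1 then 1 else 0) •
          WL (zl (ks.take i ++ [ks.getD i 0 + 1] ++ ks.drop (i + 1))) := by
  induction ks with
  | nil => simp [zl, nshW_y_nil]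
  | cons k t ih =>
    have iht := ih (fun a ha => hpos a (List.mem_cons_of_mem _ ha))
    obtain ⟨m, rfl⟩ : ∃ m, k = m + 1 := ⟨k - 1, by have := hpos k (by simp); omega⟩
    have hz : ∀ l, WL (zl ((m + 1) :: l)) =
        WL (List.replicate m Letter.x ++ [Letter.y]) * WL (zl l) := by
      intro l
      rw [WL_mul_WL, zl_cons]
      simp
    rw [zl_cons, Nat.add_sub_cancel, step, List.length_cons,
      Finset.sum_range_succ' _ t.length,
      Finset.sum_range_succ' _ t.length, Finset.sum_range_succ' _ (t.length + 1)]
    simp only [List.take_succ_cons, List.drop_succ_cons, List.cons_append, List.getD_cons_succ,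
      List.getD_cons_zero, List.take_zero, List.drop_zero, List.nil_append, hz]
    have e1 : WL (zl (1 :: (m + 1) :: t)) =
        WL (Letter.y :: (List.replicate m Letter.x ++ Letter.y :: zl t)) := by
      simp [zl_cons]
    have e2 : (if 2 ≤ m + 1 then ∑ j ∈ Finset.range (m + 1 - 1),
          WL (zl ((m + 1 - j) :: (j + 1) :: t)) else 0) =
        ∑ j ∈ Finset.range m, WL (List.replicate (m - j) Letter.x ++ Letter.y ::
        (List.replicate j Letter.x ++ Letter.y :: zl t)) := by
      split_ifs with h
      · refine Finset.sum_congr (by simp) fun j hj => ?_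
        rw [zl_cons, zl_cons]
        congr 3
        omega
      · have : m = 0 := by omega
        subst this
        simp
    have e3 : WL (zl ((m + 1 + 1) :: t)) =
        WL (List.replicate (m + 1) Letter.x ++ Letter.y :: zl t) := by
      simp [zl_cons]
    have e4 : ∀ f : ℕ → H, ∑ i ∈ Finset.range t.length,
          ((t.getD i 0 : ℚ) + if i + 1 = t.length + 1 - 1 then 1 else 0) • f i =
        ∑ i ∈ Finset.range t.length,
          ((t.getD i 0 : ℚ) + if i = t.length - 1 then 1 else 0) • f i := by
      intro f
      refine Finset.sum_congr rfl fun i hi => ?_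
      have := Finset.mem_range.1 hi
      have h : (i + 1 = t.length + 1 - 1) ↔ (i = t.length - 1) := by omega
      simp only [h]
    have e5 : ((m : ℚ) + 1 + δ (zl t)) =
        ((m + 1 : ℕ) : ℚ) + if 0 = t.length + 1 - 1 then 1 else 0 := by
      rw [delta_zl]
      push_cast
      simp
    rw [iht, e1, e2, e3, e4, e5]
    simp only [mul_add, mul_sub, Finset.mul_sum, mul_smul_comm, mul_ite, mul_zero]
    abel

/-- Lemma 3.2 (ii): for positive integers `k₁,…,kₙ`,
`y ш̄ z_{k₁}⋯z_{kₙ}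
  = Σ_{i=0}^{n} z_{k₁}⋯z_{kᵢ} z₁ z_{k_{i+1}}⋯z_{kₙ}
  + Σ_{1 ≤ i ≤ n, kᵢ ≥ 2} Σ_{j=0}^{kᵢ−2} z_{k₁}⋯z_{k_{i−1}} z_{kᵢ−j} z_{j+1} z_{k_{i+1}}⋯z_{kₙ}
  − Σ_{i=1}^{n} (kᵢ + δₙᵢ) z_{k₁}⋯z_{k_{i−1}} z_{kᵢ+1} z_{k_{i+1}}⋯z_{kₙ}`. -/
theorem lemma_3_2_ii (ks : List ℕ) (hne : ks ≠ []) (hpos : ∀ a ∈ ks, 0 < a) :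
    nsh Y (word (zListW ks)) =
      (∑ i ∈ Finset.range (ks.length + 1),
        word (zListW (ks.take i ++ [1] ++ ks.drop i))) +
      (∑ i ∈ Finset.range ks.length,
        if 2 ≤ ks.getD i 0 then
          ∑ j ∈ Finset.range (ks.getD i 0 - 1),
            word (zListW (ks.take i ++ [ks.getD i 0 - j, j + 1] ++ ks.drop (i + 1)))
        else 0) -
      ∑ i ∈ Finset.range ks.length,
        ((ks.getD i 0 : ℚ) + if i = ks.length - 1 then 1 else 0) •
          word (zListW (ks.take i ++ [ks.getD i 0 + 1] ++ ks.drop (i + 1))) := by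
  simp only [word_zListW]
  rw [← main_aux ks hpos]
  exact nsh_word [Letter.y] (zl ks)
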